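/- Let d ≥ 2, let R ∈ O(d+1), and let g be a smooth τ-invariant Riemannian metric on N = ℝ × S^d. Then there exists a nonconstant locally absolutely continuous curve γ : ℝ → N that is a Class-A minimizer: for all t₁ ≤ t₂ and every absolutely continuous curve σ : [t₁,t₂] → N with σ(t₁) = γ(t₁) and σ(t₂) = γ(t₂), the g-length of γ restricted to [t₁,t₂] is at most the g-length of σ. In particular, every smooth Riemannian metric on S¹ × S^d with d ≥ 2 admits a Class-A geodesic. -/

import Mathlib

/-!
The Riemannian distance of `N` is used through the relation `Joins g p q ℓ` (some absolutely
continuous curve from `p` to `q` has length at most `ℓ`). The minimizer constructed is a metric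
line: a curve `γ : ℝ → N` for which `t - s` is the distance from `γ s` to `γ t` whenever `s ≤ t`.
In particular it has infinite length in both directions.

* Invariance under `τ` and compactness of `[0,1] × S^d` bound `g` above and below by constant
  multiples of the ambient norm on all of `N` (`exists_comparable`).
* Take two points at distance at least `2n` and a curve joining them whose length exceeds the
  distance by less than `1/(n+1)`. Its points at prescribed accumulated length have mutual distances
  equal to the difference of parameters up to `1/(n+1)`; an iterate of `τ` moves the middle
  point over `[0,1]` (`exists_almostLine`).
* These almost lines stay, at each fixed time, in a compact set, hence converge pointwise along an
  ultrafilter. The distance is continuous because nearby points of `N` are joined by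
  short curves (`Comparable.joins_near`), so the limit is a line (`exists_isLine`).
* A line is Lipschitz for the ambient norm, hence absolutely continuous and differentiable almost
  everywhere. Near `p` the distance from `p` to `q` is at least `(1 - ε)` times the `g p`-norm of
  `q - p` (`Comparable.local_lower`), so a line has speed at most one (`IsLine.speed_le`). Its length
  on `[t₁, t₂]` is therefore at most `t₂ - t₁`, the distance of its end points.
-/

open MeasureTheory Set Filter

noncomputable section

/-- The ambient space `V d = ℝ × ℝ^{d+1}` containing `N = ℝ × S^d`. -/
abbrev V (d : ℕ) := ℝ × EuclideanSpace ℝ (Fin (d + 1))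

/-- A curve in `V d` together with a choice of a.e. derivative. -/
structure ACIn (d : ℕ) where
  f : ℝ → V d
  f' : ℝ → V d

/-- `c` is an absolutely continuous curve on `[a,b]` with values in `N = ℝ × S^d`. -/
def IsACOnN {d : ℕ} (c : ACIn d) (a b : ℝ) : Prop :=
  IntegrableOn c.f' (Icc a b) volume ∧
  (∀ t ∈ Icc a b, c.f t = c.f a + ∫ s in a..t, c.f' s) ∧
  (∀ t ∈ Icc a b, ‖(c.f t).2‖ = 1)

/-- The `g`-length of the curve `c` on `[a,b]`, for a metric `g` on `V d` given as a
field of bilinear forms. -/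
def glen {d : ℕ} (g : V d → V d →L[ℝ] V d →L[ℝ] ℝ) (c : ACIn d) (a b : ℝ) : ℝ :=
  ∫ t in a..b, Real.sqrt (g (c.f t) (c.f' t) (c.f' t))

/-- Two-sided comparison of the field of forms `g` on `N = ℝ × S^d` with the ambient norm, together
with the continuity, symmetry and positivity used below. -/
structure Comparable {d : ℕ} (g : V d → V d →L[ℝ] V d →L[ℝ] ℝ) (c C : ℝ) : Prop where
  cont : Continuous g
  symm : ∀ q : V d, ‖q.2‖ = 1 → ∀ v w : V d, g q v w = g q w v
  nonneg : ∀ q : V d, ‖q.2‖ = 1 → ∀ v : V d, 0 ≤ g q v v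
  c_pos : 0 < c
  C_pos : 0 < C
  lower : ∀ q : V d, ‖q.2‖ = 1 → ∀ v : V d, c * ‖v‖ ≤ √(g q v v)
  upper : ∀ q : V d, ‖q.2‖ = 1 → ∀ v : V d, √(g q v v) ≤ C * ‖v‖

/-- `Joins g p q ℓ`: some absolutely continuous curve in `N` from `p` to `q` has `g`-length at
most `ℓ`. The Riemannian distance of `p` and `q` is the infimum of such `ℓ`. -/
def Joins {d : ℕ} (g : V d → V d →L[ℝ] V d →L[ℝ] ℝ) (p q : V d) (ℓ : ℝ) : Prop :=
  ∃ (c : ACIn d) (a b : ℝ), a ≤ b ∧ IsACOnN c a b ∧ c.f a = p ∧ c.f b = q ∧ glen g c a b ≤ ℓ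

variable {d : ℕ} {g : V d → V d →L[ℝ] V d →L[ℝ] ℝ} {c C : ℝ}

/-! ### Absolutely continuous curves and their length -/

lemma IsACOnN.intervalIntegrable {σ : ACIn d} {a b : ℝ} (h : IsACOnN σ a b) {s t : ℝ}
    (hs : s ∈ Icc a b) (ht : t ∈ Icc a b) : IntervalIntegrable σ.f' volume s t := by
  rw [intervalIntegrable_iff']
  exact h.1.mono_set (uIcc_subset_Icc hs ht)

lemma IsACOnN.sub_eq {σ : ACIn d} {a b : ℝ} (h : IsACOnN σ a b) {s t : ℝ}
    (hs : s ∈ Icc a b) (ht : t ∈ Icc a b) : σ.f t = σ.f s + ∫ u in s..t, σ.f' u := by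
  have ha : a ∈ Icc a b := ⟨le_rfl, hs.1.trans hs.2⟩
  rw [h.2.1 t ht, h.2.1 s hs, add_assoc, intervalIntegral.integral_add_adjacent_intervals
    (h.intervalIntegrable ha hs) (h.intervalIntegrable hs ht)]

lemma IsACOnN.mono {σ : ACIn d} {a b : ℝ} (h : IsACOnN σ a b) {s t : ℝ}
    (hs : a ≤ s) (ht : t ≤ b) : IsACOnN σ s t := by
  refine ⟨h.1.mono_set (Icc_subset_Icc hs ht), fun u hu => ?_, fun u hu => ?_⟩
  · exact h.sub_eq ⟨hs, (hu.1.trans hu.2).trans ht⟩ ⟨hs.trans hu.1, hu.2.trans ht⟩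
  · exact h.2.2 u ⟨hs.trans hu.1, hu.2.trans ht⟩

lemma IsACOnN.continuousOn {σ : ACIn d} {a b : ℝ} (h : IsACOnN σ a b) :
    ContinuousOn σ.f (Icc a b) := by
  rcases le_or_gt a b with hab | hab
  · have hint : IntegrableOn σ.f' (uIcc a b) volume := by rw [uIcc_of_le hab]; exact h.1
    have hc : ContinuousOn (fun t => σ.f a + ∫ s in a..t, σ.f' s) (uIcc a b) :=
      continuousOn_const.add (intervalIntegral.continuousOn_primitive_interval hint)
    rw [uIcc_of_le hab] at hc
    exact hc.congr h.2.1
  · simp [Icc_eq_empty_of_lt hab]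

/-- The integrand of the `g`-length is integrable, so the integral defining `glen` is never a
junk value on an absolutely continuous curve. -/
lemma Comparable.integrableOn_speed (hg : Comparable g c C) {σ : ACIn d} {a b : ℝ}
    (h : IsACOnN σ a b) :
    IntegrableOn (fun t => √(g (σ.f t) (σ.f' t) (σ.f' t))) (Icc a b) volume := by
  have hmf : AEStronglyMeasurable (fun t => g (σ.f t)) (volume.restrict (Icc a b)) :=
    (hg.cont.comp_continuousOn h.continuousOn).aestronglyMeasurable measurableSet_Icc
  have hm' := h.1.aestronglyMeasurable
  have happ : Continuous fun x : (V d →L[ℝ] V d →L[ℝ] ℝ) × V d => √(x.1 x.2 x.2) := by fun_prop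
  have hm := happ.comp_aestronglyMeasurable (hmf.prodMk hm')
  refine Integrable.mono' (h.1.norm.const_mul C) hm ?_
  filter_upwards [ae_restrict_mem measurableSet_Icc] with t ht
  simpa [abs_of_nonneg (Real.sqrt_nonneg _)] using hg.upper _ (h.2.2 t ht) (σ.f' t)

lemma Comparable.intervalIntegrable_speed (hg : Comparable g c C) {σ : ACIn d} {a b : ℝ}
    (h : IsACOnN σ a b) {s t : ℝ} (hs : s ∈ Icc a b) (ht : t ∈ Icc a b) :
    IntervalIntegrable (fun t => √(g (σ.f t) (σ.f' t) (σ.f' t))) volume s t := by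
  rw [intervalIntegrable_iff']
  exact (hg.integrableOn_speed h).mono_set (uIcc_subset_Icc hs ht)

lemma Comparable.glen_add (hg : Comparable g c C) {σ : ACIn d} {a b : ℝ}
    (h : IsACOnN σ a b) {r s t : ℝ} (hr : r ∈ Icc a b) (hs : s ∈ Icc a b) (ht : t ∈ Icc a b) :
    glen g σ r s + glen g σ s t = glen g σ r t :=
  intervalIntegral.integral_add_adjacent_intervals (hg.intervalIntegrable_speed h hr hs)
    (hg.intervalIntegrable_speed h hs ht)

lemma glen_nonneg {σ : ACIn d} {a b : ℝ} (h : a ≤ b) : 0 ≤ glen g σ a b :=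
  intervalIntegral.integral_nonneg h fun _ _ => Real.sqrt_nonneg _

lemma Comparable.norm_sub_le_glen (hg : Comparable g c C) {σ : ACIn d} {a b : ℝ} (hab : a ≤ b)
    (h : IsACOnN σ a b) : c * ‖σ.f b - σ.f a‖ ≤ glen g σ a b := by
  have ha : a ∈ Icc a b := ⟨le_rfl, hab⟩
  have hb : b ∈ Icc a b := ⟨hab, le_rfl⟩
  rw [h.sub_eq ha hb, add_sub_cancel_left]
  calc c * ‖∫ u in a..b, σ.f' u‖ ≤ c * ∫ u in a..b, ‖σ.f' u‖ := by
        gcongr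
        · exact hg.c_pos.le
        · exact intervalIntegral.norm_integral_le_integral_norm hab
    _ = ∫ u in a..b, c * ‖σ.f' u‖ := by rw [intervalIntegral.integral_const_mul]
    _ ≤ glen g σ a b := by
        refine intervalIntegral.integral_mono_on hab
          ((h.intervalIntegrable ha hb).norm.const_mul c) (hg.intervalIntegrable_speed h ha hb) ?_
        intro u hu
        exact hg.lower _ (h.2.2 u hu) _

/-- A Lipschitz curve in `N`, with its pointwise derivative, is absolutely continuous. -/
lemma isACOnN_of_lipschitz {f : ℝ → V d} {K : NNReal} (hf : LipschitzWith K f)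
    (hN : ∀ t, ‖(f t).2‖ = 1) (a b : ℝ) : IsACOnN ⟨f, deriv f⟩ a b := by
  have hint : ∀ a b, IntegrableOn (deriv f) (Icc a b) volume := fun a b =>
    Measure.integrableOn_of_bounded (M := K) (by simp)
      (stronglyMeasurable_deriv f).aestronglyMeasurable
      (Eventually.of_forall fun t => norm_deriv_le_of_lipschitz hf)
  refine ⟨hint a b, fun t ht => ?_, fun t _ => hN t⟩
  have hii : IntervalIntegrable (deriv f) volume a t := by
    rw [intervalIntegrable_iff_integrableOn_Icc_of_le ht.1]
    exact hint a t
  rw [← sub_eq_iff_eq_add']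
  show f t - f a = ∫ s in a..t, deriv f s
  -- The fundamental theorem of calculus is available for real functions: test with functionals.
  refine (SeparatingDual.eq_iff_forall_dual_eq (R := ℝ)).2 fun ψ => ?_
  rw [← ψ.intervalIntegral_comp_comm hii, map_sub]
  have hac : AbsolutelyContinuousOnInterval (fun t => ψ (f t)) a t :=
    ((ψ.lipschitz.comp hf).lipschitzOnWith (s := uIcc a t)).absolutelyContinuousOnInterval
  rw [← hac.integral_deriv_eq_sub]
  refine intervalIntegral.integral_congr_ae ?_
  filter_upwards [hf.ae_differentiableAt_real] with x hx _
  exact (ψ.hasFDerivAt.comp_hasDerivAt x hx.hasDerivAt).deriv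

/-! ### Joining points -/

lemma Joins.mono {p q : V d} {ℓ ℓ' : ℝ} (h : Joins g p q ℓ) (hl : ℓ ≤ ℓ') : Joins g p q ℓ' := by
  obtain ⟨σ, a, b, hab, h1, h2, h3, h4⟩ := h
  exact ⟨σ, a, b, hab, h1, h2, h3, h4.trans hl⟩

lemma Joins.refl {p : V d} (hp : ‖p.2‖ = 1) : Joins g p p 0 := by
  refine ⟨⟨fun _ => p, fun _ => 0⟩, 0, 0, le_rfl, ⟨by simp, by simp, fun _ _ => hp⟩, rfl, rfl, ?_⟩
  simp [glen]

lemma Joins.norm_left {p q : V d} {ℓ : ℝ} (h : Joins g p q ℓ) : ‖p.2‖ = 1 := by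
  obtain ⟨σ, a, b, hab, h1, rfl, -, -⟩ := h
  exact h1.2.2 a ⟨le_rfl, hab⟩

lemma Joins.norm_right {p q : V d} {ℓ : ℝ} (h : Joins g p q ℓ) : ‖q.2‖ = 1 := by
  obtain ⟨σ, a, b, hab, h1, -, rfl, -⟩ := h
  exact h1.2.2 b ⟨hab, le_rfl⟩

lemma Comparable.norm_sub_le_of_joins (hg : Comparable g c C) {p q : V d} {ℓ : ℝ} (h : Joins g p q ℓ) :
    c * ‖q - p‖ ≤ ℓ := by
  obtain ⟨σ, a, b, hab, h1, rfl, rfl, h4⟩ := h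
  exact (hg.norm_sub_le_glen hab h1).trans h4

/-- Concatenation: the second curve is translated in time to start where the first one ends. -/
lemma Comparable.joins_trans (hg : Comparable g c C) {p q r : V d} {ℓ ℓ' : ℝ}
    (h : Joins g p q ℓ) (h' : Joins g q r ℓ') : Joins g p r (ℓ + ℓ') := by
  obtain ⟨σ, a, b, hab, h1, rfl, hq, h4⟩ := h
  obtain ⟨σ', a', b', hab', h1', hq', rfl, h4'⟩ := h'
  set e : ℝ := a' - b with he
  set ρ : ACIn d := ⟨fun t => if t ≤ b then σ.f t else σ'.f (t + e),
    fun t => if t ≤ b then σ.f' t else σ'.f' (t + e)⟩ with hρ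
  have hb : b ∈ Icc a b := ⟨hab, le_rfl⟩
  have hfl : ∀ t ≤ b, ρ.f t = σ.f t := fun t ht => by simp [hρ, ht]
  have hfl' : ∀ t ≤ b, ρ.f' t = σ.f' t := fun t ht => by simp [hρ, ht]
  have hfr : ∀ t, b ≤ t → ρ.f t = σ'.f (t + e) := fun t ht => by
    rcases ht.eq_or_lt with rfl | ht
    · rw [hfl b le_rfl, hq, ← hq']; congr 1; simp [he]
    · simp [hρ, not_le.2 ht]
  have hfr' : ∀ t, b < t → ρ.f' t = σ'.f' (t + e) := fun t ht => by simp [hρ, not_le.2 ht]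
  set B : ℝ := b' - e with hB
  have hbB : b ≤ B := by simp only [hB, he]; linarith
  have hL : ∀ t ∈ Icc a b, ∫ s in a..t, ρ.f' s = ∫ s in a..t, σ.f' s := fun t ht => by
    refine intervalIntegral.integral_congr fun s hs => ?_
    rw [uIcc_of_le ht.1] at hs
    exact hfl' s (hs.2.trans ht.2)
  have hR : ∀ t, b ≤ t → ∫ s in b..t, ρ.f' s = ∫ s in a'..(t + e), σ'.f' s := fun t ht => by
    have : ∫ s in b..t, ρ.f' s = ∫ s in b..t, σ'.f' (s + e) := by
      refine intervalIntegral.integral_congr_ae (Eventually.of_forall fun s hs => ?_)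
      rw [uIoc_of_le ht] at hs
      exact hfr' s hs.1
    rw [this, intervalIntegral.integral_comp_add_right]
    congr 1; simp [he]
  have hiL : IntegrableOn ρ.f' (Icc a b) volume :=
    h1.1.congr_fun (fun s hs => (hfl' s hs.2).symm) measurableSet_Icc
  have hiR : IntegrableOn ρ.f' (Ioc b B) volume := by
    have h2 : IntegrableOn (fun s => σ'.f' (s + e)) (Ioc b B) volume := by
      have := (h1'.intervalIntegrable ⟨le_rfl, hab'⟩ ⟨hab', le_rfl⟩).comp_add_right e
      rw [intervalIntegrable_iff_integrableOn_Ioc_of_le (by linarith)] at this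
      simpa [hB, he] using this
    exact h2.congr_fun (fun s hs => (hfr' s hs.1).symm) measurableSet_Ioc
  have hi : IntegrableOn ρ.f' (Icc a B) volume := by
    rw [← Icc_union_Ioc_eq_Icc hab hbB]
    exact hiL.union hiR
  have hmem : ∀ t ∈ Icc b B, t + e ∈ Icc a' b' := fun t ht => by
    obtain ⟨h1, h2⟩ := ht
    simp only [hB, he] at *
    constructor <;> linarith
  have hac : IsACOnN ρ a B := by
    refine ⟨hi, fun t ht => ?_, fun t ht => ?_⟩
    · rcases le_total t b with htb | htb
      · rw [hL t ⟨ht.1, htb⟩, hfl t htb, hfl a hab, h1.2.1 t ⟨ht.1, htb⟩]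
      · have hii : ∀ s ∈ Icc a B, ∀ t ∈ Icc a B, IntervalIntegrable ρ.f' volume s t :=
          fun s hs t ht => by
            rw [intervalIntegrable_iff']
            exact hi.mono_set (uIcc_subset_Icc hs ht)
        rw [← intervalIntegral.integral_add_adjacent_intervals
          (hii a ⟨le_rfl, hab.trans hbB⟩ b ⟨hab, hbB⟩) (hii b ⟨hab, hbB⟩ t ht), hL b hb, hR t htb,
          hfl a hab, hfr t htb, ← add_assoc, ← h1.2.1 b hb, hq, ← hq',
          ← h1'.2.1 _ (hmem t ⟨htb, ht.2⟩)]
    · rcases le_total t b with htb | htb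
      · rw [hfl t htb]; exact h1.2.2 t ⟨ht.1, htb⟩
      · rw [hfr t htb]; exact h1'.2.2 _ (hmem t ⟨htb, ht.2⟩)
  refine ⟨ρ, a, B, hab.trans hbB, hac, hfl a hab, ?_, ?_⟩
  · rw [hfr B hbB]; congr 1; simp [hB]
  rw [← hg.glen_add hac (r := a) (s := b) (t := B) ⟨le_rfl, hab.trans hbB⟩ ⟨hab, hbB⟩
    ⟨hab.trans hbB, le_rfl⟩]
  have e1 : glen g ρ a b = glen g σ a b := by
    refine intervalIntegral.integral_congr fun s hs => ?_
    rw [uIcc_of_le hab] at hs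
    simp only [hfl s hs.2, hfl' s hs.2]
  have e2 : glen g ρ b B = glen g σ' a' b' := by
    have : glen g ρ b B =
        ∫ s in b..B, (fun u => √(g (σ'.f u) (σ'.f' u) (σ'.f' u))) (s + e) := by
      refine intervalIntegral.integral_congr_ae (Eventually.of_forall fun s hs => ?_)
      rw [uIoc_of_le hbB] at hs
      simp only [hfr s hs.1.le, hfr' s hs.1]
    rw [this, intervalIntegral.integral_comp_add_right
      (fun u => √(g (σ'.f u) (σ'.f' u) (σ'.f' u)))]
    simp [glen, hB, he]
  rw [e1, e2]
  linarith

/-- A Lipschitz curve in `N` has `g`-length at most `C * K` per unit of time. -/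
lemma Comparable.joins_of_lipschitz (hg : Comparable g c C) {f : ℝ → V d} {K : NNReal}
    (hf : LipschitzWith K f) (hN : ∀ t, ‖(f t).2‖ = 1) {a b : ℝ} (hab : a ≤ b) :
    Joins g (f a) (f b) (C * K * (b - a)) := by
  have hac := isACOnN_of_lipschitz hf hN a b
  refine ⟨⟨f, deriv f⟩, a, b, hab, hac, rfl, rfl, ?_⟩
  have h1 : glen g ⟨f, deriv f⟩ a b ≤ ∫ _ in a..b, C * K := by
    refine intervalIntegral.integral_mono_on hab
      (hg.intervalIntegrable_speed hac ⟨le_rfl, hab⟩ ⟨hab, le_rfl⟩)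
      intervalIntegrable_const fun t _ => ?_
    refine (hg.upper _ (hN t) _).trans ?_
    exact mul_le_mul_of_nonneg_left (norm_deriv_le_of_lipschitz hf) hg.C_pos.le
  refine h1.trans (le_of_eq ?_)
  rw [intervalIntegral.integral_const, smul_eq_mul, mul_comm]

/-- Radial projection to the unit sphere is `4`-Lipschitz outside the ball of radius `1/2`. -/
lemma norm_normalize_sub_le {E : Type*} [NormedAddCommGroup E] [NormedSpace ℝ E] {x y : E}
    (hx : 1 / 2 ≤ ‖x‖) (hy : 1 / 2 ≤ ‖y‖) :
    ‖‖x‖⁻¹ • x - ‖y‖⁻¹ • y‖ ≤ 4 * ‖x - y‖ := by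
  have hx0 : 0 < ‖x‖ := by linarith
  have hy0 : 0 < ‖y‖ := by linarith
  have hxi : ‖x‖⁻¹ ≤ 2 := by
    rw [inv_le_comm₀ hx0 (by norm_num)]; linarith
  have e : ‖x‖⁻¹ • x - ‖y‖⁻¹ • y = ‖x‖⁻¹ • (x - y) + (‖x‖⁻¹ - ‖y‖⁻¹) • y := by
    rw [smul_sub, sub_smul]; abel
  have h2 : ‖(‖x‖⁻¹ - ‖y‖⁻¹) • y‖ ≤ ‖x‖⁻¹ * ‖x - y‖ := by
    have e2 : ‖x‖⁻¹ - ‖y‖⁻¹ = ‖x‖⁻¹ * (‖y‖ - ‖x‖) * ‖y‖⁻¹ := by field_simp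
    rw [norm_smul, e2, Real.norm_eq_abs, abs_mul, abs_mul, abs_of_pos (inv_pos.2 hx0),
      abs_of_pos (inv_pos.2 hy0), mul_assoc, inv_mul_cancel₀ hy0.ne', mul_one]
    gcongr
    rw [abs_sub_comm]
    exact abs_norm_sub_norm_le x y
  have h1 : ‖‖x‖⁻¹ • (x - y)‖ = ‖x‖⁻¹ * ‖x - y‖ := by
    rw [norm_smul, norm_inv, norm_norm]
  rw [e]
  refine (norm_add_le _ _).trans ?_
  rw [h1]
  have h0 := norm_nonneg (x - y)
  nlinarith

/-- Nearby points of `N` are joined by the radial projection of the straight segment. -/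
lemma Comparable.joins_near (hg : Comparable g c C) {p q : V d} (hp : ‖p.2‖ = 1) (hq : ‖q.2‖ = 1)
    (hpq : ‖q - p‖ ≤ 1 / 2) : Joins g p q (4 * C * ‖q - p‖) := by
  set κ : ℝ → ℝ := fun t => max 0 (min 1 t) with hκ
  have hκ0 : ∀ t, 0 ≤ κ t := fun t => le_max_left _ _
  have hκ1 : ∀ t, κ t ≤ 1 := fun t => max_le zero_le_one (min_le_left _ _)
  have hκL : ∀ s t, |κ s - κ t| ≤ |s - t| := fun s t => by
    simp only [hκ]
    have h1 := abs_max_sub_max_le_max 0 (min 1 s) 0 (min 1 t)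
    have h2 := abs_min_sub_min_le_max 1 s 1 t
    simp only [sub_self, abs_zero, abs_nonneg, sup_of_le_right] at h1 h2
    exact h1.trans h2
  have hp1 : |q.1 - p.1| ≤ ‖q - p‖ := norm_fst_le (q - p)
  have hp2 : ‖q.2 - p.2‖ ≤ ‖q - p‖ := norm_snd_le (q - p)
  set w : ℝ → EuclideanSpace ℝ (Fin (d + 1)) := fun t => p.2 + κ t • (q.2 - p.2) with hw
  have hwn : ∀ t, 1 / 2 ≤ ‖w t‖ := fun t => by
    have h1 : ‖p.2‖ ≤ ‖w t‖ + ‖κ t • (q.2 - p.2)‖ := by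
      have := norm_sub_le (w t) (κ t • (q.2 - p.2))
      simpa [hw] using this
    have h2 : ‖κ t • (q.2 - p.2)‖ ≤ 1 * (1 / 2) := by
      rw [norm_smul, Real.norm_eq_abs, abs_of_nonneg (hκ0 t)]
      exact mul_le_mul (hκ1 t) (hp2.trans hpq) (norm_nonneg _) zero_le_one
    rw [hp] at h1
    linarith
  set f : ℝ → V d := fun t => (p.1 + κ t * (q.1 - p.1), ‖w t‖⁻¹ • w t) with hf
  have hN : ∀ t, ‖(f t).2‖ = 1 := fun t => by
    have : ‖w t‖ ≠ 0 := by linarith [hwn t]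
    simp [hf, norm_smul, this]
  have hlip : LipschitzWith (4 * ‖q - p‖).toNNReal f := by
    refine LipschitzWith.of_dist_le_mul fun s t => ?_
    rw [Real.coe_toNNReal _ (by positivity), dist_eq_norm, Real.dist_eq]
    have hst : f s - f t = ((κ s - κ t) * (q.1 - p.1), ‖w s‖⁻¹ • w s - ‖w t‖⁻¹ • w t) := by
      simp only [hf, Prod.mk_sub_mk]
      congr 1; ring
    rw [hst, Prod.norm_def]
    refine max_le ?_ ?_
    · show ‖(κ s - κ t) * (q.1 - p.1)‖ ≤ _
      rw [Real.norm_eq_abs, abs_mul]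
      have := mul_le_mul (hκL s t) hp1 (abs_nonneg _) (abs_nonneg _)
      have h0 : 0 ≤ |s - t| * ‖q - p‖ := by positivity
      linarith
    · refine (norm_normalize_sub_le (hwn s) (hwn t)).trans ?_
      have e : w s - w t = (κ s - κ t) • (q.2 - p.2) := by
        simp only [hw, sub_smul]; abel
      rw [e, norm_smul, Real.norm_eq_abs]
      have := mul_le_mul (hκL s t) hp2 (norm_nonneg _) (abs_nonneg _)
      linarith
  have h0 : f 0 = p := by
    simp [hf, hw, hκ, hp]
  have h1 : f 1 = q := by
    simp [hf, hw, hκ, hq]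
  have := hg.joins_of_lipschitz hlip hN (zero_le_one)
  rw [h0, h1, Real.coe_toNNReal _ (by positivity)] at this
  exact this.mono (by linarith)

/-- Moving along the `ℝ`-factor: points with the same spherical component can be joined. -/
lemma Comparable.joins_line (hg : Comparable g c C) {e : EuclideanSpace ℝ (Fin (d + 1))}
    (he : ‖e‖ = 1) {x y : ℝ} (hxy : x ≤ y) : ∃ ℓ, Joins g (x, e) (y, e) ℓ := by
  have hlip : LipschitzWith 1 (fun t : ℝ => ((t, e) : V d)) := by
    refine LipschitzWith.of_dist_le_mul fun s t => ?_
    simp [Prod.dist_eq]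
  exact ⟨_, hg.joins_of_lipschitz hlip (fun _ => he) hxy⟩

/-! ### Invariance and uniform bounds -/

/-- The `k`-th iterate of `τ(x, p) = (x + 1, R p)`. -/
def shift (R : EuclideanSpace ℝ (Fin (d + 1)) ≃ₗᵢ[ℝ] EuclideanSpace ℝ (Fin (d + 1))) (k : ℤ)
    (q : V d) : V d := (q.1 + k, (R ^ k) q.2)

/-- The differential of the `k`-th iterate of `τ`. -/
def dshift (R : EuclideanSpace ℝ (Fin (d + 1)) ≃ₗᵢ[ℝ] EuclideanSpace ℝ (Fin (d + 1))) (k : ℤ) :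
    V d →L[ℝ] V d :=
  (ContinuousLinearMap.id ℝ ℝ).prodMap ((R ^ k).toContinuousLinearEquiv : _ →L[ℝ] _)

variable {R : EuclideanSpace ℝ (Fin (d + 1)) ≃ₗᵢ[ℝ] EuclideanSpace ℝ (Fin (d + 1))}

lemma dshift_apply (k : ℤ) (v : V d) : dshift R k v = (v.1, (R ^ k) v.2) := rfl

lemma norm_shift_snd (k : ℤ) (q : V d) : ‖(shift R k q).2‖ = ‖q.2‖ := by
  simp [shift]

lemma norm_dshift (k : ℤ) (v : V d) : ‖dshift R k v‖ = ‖v‖ := by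
  simp [dshift_apply, Prod.norm_def]

lemma shift_shift (j k : ℤ) (q : V d) : shift R j (shift R k q) = shift R (j + k) q := by
  simp only [shift, zpow_add, Int.cast_add, LinearIsometryEquiv.coe_mul, Function.comp_apply]
  congr 1; ring

lemma shift_zero (q : V d) : shift R 0 q = q := by simp [shift]

lemma dshift_dshift (j k : ℤ) (v : V d) : dshift R j (dshift R k v) = dshift R (j + k) v := by
  simp [dshift_apply, zpow_add]

lemma dshift_zero (v : V d) : dshift R 0 v = v := by simp [dshift_apply]

/-- `g` is invariant under the diffeomorphism `τ`. -/
def ShiftInvariant (R : EuclideanSpace ℝ (Fin (d + 1)) ≃ₗᵢ[ℝ] EuclideanSpace ℝ (Fin (d + 1)))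
    (g : V d → V d →L[ℝ] V d →L[ℝ] ℝ) : Prop :=
  ∀ q : V d, ‖q.2‖ = 1 → ∀ v w : V d,
      g (q.1 + 1, R q.2) (v.1, R v.2) (w.1, R w.2) = g q v w

lemma ShiftInvariant.shift (h : ShiftInvariant R g) (k : ℤ) : ∀ q : V d, ‖q.2‖ = 1 → ∀ v w : V d,
    g (shift R k q) (dshift R k v) (dshift R k w) = g q v w := by
  have h1 : ∀ q : V d, ‖q.2‖ = 1 → ∀ v w : V d,
      g (_root_.shift R 1 q) (dshift R 1 v) (dshift R 1 w) = g q v w := fun q hq v w => by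
    simpa [_root_.shift, dshift_apply] using h q hq v w
  induction k using Int.induction_on with
  | zero => intro q _ v w; simp [shift_zero, dshift_zero]
  | succ i ih =>
    intro q hq v w
    rw [add_comm (i : ℤ) 1, ← shift_shift, ← dshift_dshift, ← dshift_dshift,
      h1 _ (by rw [norm_shift_snd, hq]), ih q hq]
  | pred i ih =>
    intro q hq v w
    rw [← h1 _ (by rw [norm_shift_snd, hq]), shift_shift, dshift_dshift, dshift_dshift,
      add_sub_cancel, ih q hq]

lemma ShiftInvariant.joins_shift (h : ShiftInvariant R g) (k : ℤ) {p q : V d} {ℓ : ℝ}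
    (hJ : Joins g p q ℓ) : Joins g (_root_.shift R k p) (_root_.shift R k q) ℓ := by
  obtain ⟨σ, a, b, hab, h1, rfl, rfl, h4⟩ := hJ
  refine ⟨⟨fun t => _root_.shift R k (σ.f t), fun t => dshift R k (σ.f' t)⟩, a, b, hab,
    ⟨?_, ?_, ?_⟩, rfl, rfl, ?_⟩
  · exact (dshift R k).integrable_comp h1.1
  · intro t ht
    have hadd : ∀ x y : V d, _root_.shift R k (x + y) = _root_.shift R k x + dshift R k y := by
      intro x y
      simp only [_root_.shift, dshift_apply, Prod.fst_add, Prod.snd_add, map_add, Prod.mk_add_mk]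
      congr 1; ring
    simp only
    rw [(dshift R k).intervalIntegral_comp_comm
      (h1.intervalIntegrable ⟨le_rfl, hab⟩ ht), ← hadd, ← h1.2.1 t ht]
  · intro t ht
    simp only [norm_shift_snd]
    exact h1.2.2 t ht
  · refine le_trans (le_of_eq ?_) h4
    refine intervalIntegral.integral_congr fun t ht => ?_
    rw [uIcc_of_le hab] at ht
    simp only [h.shift k _ (h1.2.2 t ht)]

lemma ShiftInvariant.joins_shift_iff (h : ShiftInvariant R g) (k : ℤ) {p q : V d} {ℓ : ℝ} :
    Joins g (_root_.shift R k p) (_root_.shift R k q) ℓ ↔ Joins g p q ℓ := by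
  refine ⟨fun hJ => ?_, h.joins_shift k⟩
  simpa [shift_shift, shift_zero] using h.joins_shift (-k) hJ

/-- By `τ`-invariance the bounds need only be found over the compact set `[0,1] × S^d`. -/
lemma exists_comparable (hcont : Continuous g)
    (hsymm : ∀ q : V d, ‖q.2‖ = 1 → ∀ v w : V d, g q v w = g q w v)
    (hpos : ∀ q : V d, ‖q.2‖ = 1 → ∀ v : V d, v ≠ 0 → 0 < g q v v)
    (h : ShiftInvariant R g) : ∃ c C, Comparable g c C := by
  set K : Set (V d × V d) := (Icc (0 : ℝ) 1 ×ˢ Metric.sphere 0 1) ×ˢ Metric.sphere 0 1 with hK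
  have hKc : IsCompact K := (isCompact_Icc.prod (isCompact_sphere _ _)).prod (isCompact_sphere _ _)
  have hKn : K.Nonempty := by
    refine ⟨((0, EuclideanSpace.single 0 1), (1, 0)), ⟨⟨by simp, by simp⟩, ?_⟩⟩
    simp [Prod.norm_def]
  set F : V d × V d → ℝ := fun x => √(g x.1 x.2 x.2) with hF
  have hFc : Continuous F := by
    simp only [hF]; fun_prop
  have hFp : ∀ x ∈ K, 0 < F x := by
    rintro ⟨q, v⟩ ⟨⟨_, hq⟩, hv⟩
    refine Real.sqrt_pos.2 (hpos q (by simpa using hq) v ?_)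
    rintro rfl
    simp at hv
  obtain ⟨m, hm, hmin⟩ := hKc.exists_isMinOn hKn hFc.continuousOn
  obtain ⟨M, hM, hmax⟩ := hKc.exists_isMaxOn hKn hFc.continuousOn
  have key : ∀ q : V d, ‖q.2‖ = 1 → ∀ v : V d, v ≠ 0 →
      ∃ x ∈ K, √(g q v v) = F x * ‖v‖ := by
    intro q hq v hv
    have hv0 : ‖v‖ ≠ 0 := norm_ne_zero_iff.2 hv
    refine ⟨(shift R (-⌊q.1⌋) q, ‖v‖⁻¹ • dshift R (-⌊q.1⌋) v), ⟨⟨?_, ?_⟩, ?_⟩, ?_⟩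
    · simp only [shift, Int.cast_neg, ← sub_eq_add_neg]
      exact ⟨Int.fract_nonneg _, (Int.fract_lt_one _).le⟩
    · simp [norm_shift_snd, hq]
    · simp [norm_smul, norm_dshift, hv0]
    · have hn : 0 ≤ ‖v‖⁻¹ := by positivity
      simp only [hF, map_smul, smul_apply, smul_eq_mul, h.shift _ q hq]
      rw [← mul_assoc, Real.sqrt_mul (by positivity), Real.sqrt_mul_self hn]
      field_simp
  refine ⟨F m, F M, hcont, hsymm, ?_, hFp m hm, hFp M hM, ?_, ?_⟩
  · intro q hq v
    by_cases hv : v = 0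
    · simp [hv]
    · exact (hpos q hq v hv).le
  · intro q hq v
    by_cases hv : v = 0
    · simp [hv]
    · obtain ⟨x, hx, e⟩ := key q hq v hv
      rw [e]
      exact mul_le_mul_of_nonneg_right (hmin hx) (norm_nonneg _)
  · intro q hq v
    by_cases hv : v = 0
    · simp [hv]
    · obtain ⟨x, hx, e⟩ := key q hq v hv
      rw [e]
      exact mul_le_mul_of_nonneg_right (hmax hx) (norm_nonneg _)

/-! ### Almost minimizing segments and their limit -/

/-- A curve `η` on `[-n, n]` whose points at times `s ≤ t` are at distance between
`t - s - 1/(n+1)` and `t - s`, lying over `[0, 1]` at time `0`. -/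
structure AlmostLine (g : V d → V d →L[ℝ] V d →L[ℝ] ℝ) (n : ℕ) (η : ℝ → V d) : Prop where
  zero_mem : (η 0).1 ∈ Icc (0 : ℝ) 1
  joins : ∀ s t : ℝ, -n ≤ s → s ≤ t → t ≤ n → Joins g (η s) (η t) (t - s)
  le : ∀ s t : ℝ, -n ≤ s → s ≤ t → t ≤ n → ∀ ℓ, Joins g (η s) (η t) ℓ → t - s - 1 / (n + 1) ≤ ℓ

/-- An almost shortest curve between two points at distance at least `2n`, evaluated at the times
at which the length accumulated so far takes prescribed values, is an almost line. No
reparametrization is needed, since only the values of the resulting map matter. -/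
lemma exists_almostLine (hg : Comparable g c C) (h : ShiftInvariant R g) (n : ℕ) :
    ∃ η, AlmostLine g n η := by
  obtain ⟨e, he⟩ : ∃ e : EuclideanSpace ℝ (Fin (d + 1)), ‖e‖ = 1 :=
    ⟨EuclideanSpace.single 0 1, by simp⟩
  set M : ℝ := 2 * n / c with hM
  have hc := hg.c_pos
  have hM0 : 0 ≤ M := by positivity
  set p : V d := (0, e) with hp
  set q : V d := (M, e) with hq
  set S : Set ℝ := {ℓ | Joins g p q ℓ} with hS
  have hSn : S.Nonempty := hg.joins_line he hM0
  have hSl : ∀ ℓ ∈ S, 2 * (n : ℝ) ≤ ℓ := fun ℓ hℓ => by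
    have h1 := hg.norm_sub_le_of_joins hℓ
    have h2 : M ≤ ‖q - p‖ := by
      have := norm_fst_le (q - p)
      simp only [hp, hq, Prod.mk_sub_mk, sub_zero, Real.norm_eq_abs, abs_of_nonneg hM0] at this ⊢
      exact this
    have h3 : c * M = 2 * n := by rw [hM]; field_simp
    nlinarith
  have hSb : BddBelow S := ⟨_, fun ℓ hℓ => hSl ℓ hℓ⟩
  set D := sInf S with hD
  have hε : (0 : ℝ) < 1 / (n + 1) := by positivity
  obtain ⟨ℓ, hℓ, hℓD⟩ := exists_lt_of_csInf_lt hSn (lt_add_of_pos_right D hε)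
  obtain ⟨σ, a, b, hab, hσ, ha, hb, hlen⟩ := hℓ
  have haI : a ∈ Icc a b := ⟨le_rfl, hab⟩
  have hbI : b ∈ Icc a b := ⟨hab, le_rfl⟩
  set L := glen g σ a b with hL
  have hLS : L ∈ S := ⟨σ, a, b, hab, hσ, ha, hb, le_rfl⟩
  have hL2 : 2 * (n : ℝ) ≤ L := hSl L hLS
  -- times at which the accumulated length is prescribed
  have htime : ∀ u ∈ Icc 0 L, ∃ t ∈ Icc a b, glen g σ a t = u := by
    have hcont : ContinuousOn (fun t => glen g σ a t) (Icc a b) := by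
      have := intervalIntegral.continuousOn_primitive_interval (μ := volume)
        (f := fun t => √(g (σ.f t) (σ.f' t) (σ.f' t))) (a := a) (b := b)
        (by rw [uIcc_of_le hab]; exact hg.integrableOn_speed hσ)
      rwa [uIcc_of_le hab] at this
    intro u hu
    have h0 : glen g σ a a = 0 := by simp [glen]
    have := intermediate_value_Icc hab hcont
    obtain ⟨t, ht, e⟩ := this (show u ∈ Icc (glen g σ a a) (glen g σ a b) by rwa [h0])
    exact ⟨t, ht, e⟩
  choose! T hT hTu using htime
  have hsub : ∀ s ∈ Icc a b, ∀ t ∈ Icc a b, s ≤ t →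
      Joins g (σ.f s) (σ.f t) (glen g σ s t) := fun s hs t ht hst =>
    ⟨σ, s, t, hst, hσ.mono hs.1 ht.2, rfl, rfl, le_rfl⟩
  have hseg : ∀ u v : ℝ, 0 ≤ u → u ≤ v → v ≤ L → Joins g (σ.f (T u)) (σ.f (T v)) (v - u) := by
    intro u v hu huv hv
    have huI : u ∈ Icc 0 L := ⟨hu, huv.trans hv⟩
    have hvI : v ∈ Icc 0 L := ⟨hu.trans huv, hv⟩
    rcases huv.eq_or_lt with rfl | huv'
    · rw [sub_self]; exact Joins.refl (hσ.2.2 _ (hT u huI))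
    have hadd := hg.glen_add hσ haI (hT u huI) (hT v hvI)
    rw [hTu u huI, hTu v hvI] at hadd
    have hTT : T u ≤ T v := by
      by_contra! hlt
      have h1 := hg.glen_add hσ haI (hT v hvI) (hT u huI)
      rw [hTu u huI, hTu v hvI] at h1
      have := glen_nonneg (g := g) (σ := σ) hlt.le
      linarith
    exact (hsub _ (hT u huI) _ (hT v hvI) hTT).mono (by linarith)
  have hlow : ∀ u v : ℝ, 0 ≤ u → u ≤ v → v ≤ L → ∀ ℓ, Joins g (σ.f (T u)) (σ.f (T v)) ℓ →
      v - u - 1 / (n + 1) ≤ ℓ := by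
    intro u v hu huv hv ℓ' hJ
    have huI : u ∈ Icc 0 L := ⟨hu, huv.trans hv⟩
    have hvI : v ∈ Icc 0 L := ⟨hu.trans huv, hv⟩
    have h1 := hsub a haI _ (hT u huI) (hT u huI).1
    have h2 := hsub _ (hT v hvI) b hbI (hT v hvI).2
    rw [hTu u huI, ha] at h1
    rw [hb] at h2
    have h3 : D ≤ u + ℓ' + glen g σ (T v) b :=
      csInf_le hSb (hg.joins_trans (hg.joins_trans h1 hJ) h2)
    have h4 := hg.glen_add hσ haI (hT v hvI) hbI
    rw [hTu v hvI] at h4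
    linarith
  -- recentring by an iterate of `τ`
  set k : ℤ := -⌊(σ.f (T n)).1⌋ with hk
  refine ⟨fun s => shift R k (σ.f (T (n + s))), ?_, ?_, ?_⟩
  · simp only [shift, hk, add_zero, Int.cast_neg, ← sub_eq_add_neg]
    exact ⟨Int.fract_nonneg _, (Int.fract_lt_one _).le⟩
  · intro s t hs hst ht
    refine h.joins_shift k ?_
    exact (hseg (n + s) (n + t) (by linarith) (by linarith) (by linarith)).mono (by linarith)
  · intro s t hs hst ht ℓ' hJ
    have := hlow (n + s) (n + t) (by linarith) (by linarith) (by linarith) ℓ'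
      ((h.joins_shift_iff k).1 hJ)
    linarith

/-- A curve `γ : ℝ → N` with `t - s` the distance from `γ s` to `γ t` for all `s ≤ t`. -/
structure IsLine (g : V d → V d →L[ℝ] V d →L[ℝ] ℝ) (γ : ℝ → V d) : Prop where
  norm_eq : ∀ s, ‖(γ s).2‖ = 1
  joins : ∀ s t : ℝ, s ≤ t → ∀ ε > 0, Joins g (γ s) (γ t) (t - s + ε)
  le : ∀ s t : ℝ, s ≤ t → ∀ ℓ, Joins g (γ s) (γ t) ℓ → t - s ≤ ℓ

/-- The pointwise limit of almost lines along an ultrafilter is a line. -/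
lemma exists_isLine (hg : Comparable g c C) (h : ∀ n, ∃ η, AlmostLine g n η) :
    ∃ γ, IsLine g γ := by
  choose η hη using h
  set U : Ultrafilter ℕ := hyperfilter ℕ with hU
  have hUtop : (U : Filter ℕ) ≤ atTop := by
    rw [← Nat.cofinite_eq_atTop]; exact hyperfilter_le_cofinite
  have hc := hg.c_pos
  have hC := hg.C_pos
  have hlarge : ∀ s : ℝ, ∀ᶠ n : ℕ in U, |s| ≤ n := fun s =>
    hUtop (tendsto_natCast_atTop_atTop.eventually (eventually_ge_atTop |s|))
  have hnorm : ∀ s : ℝ, ∀ n : ℕ, |s| ≤ n → ‖(η n s).2‖ = 1 := fun s n hn =>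
    ((hη n).joins s s (abs_le.1 hn).1 le_rfl (abs_le.1 hn).2).norm_left
  have hbdd : ∀ s : ℝ, ∀ n : ℕ, |s| ≤ n → ‖η n s‖ ≤ 1 + |s| / c := by
    intro s n hn
    have h0 : ‖η n 0‖ ≤ 1 := by
      rw [Prod.norm_def]
      refine max_le ?_ (hnorm 0 n (by simp)).le
      have := (hη n).zero_mem
      rw [Real.norm_eq_abs, abs_of_nonneg this.1]; exact this.2
    have h1 : c * ‖η n s - η n 0‖ ≤ |s| := by
      rcases le_total 0 s with hs | hs
      · have := hg.norm_sub_le_of_joins ((hη n).joins 0 s (by simp) hs (abs_le.1 hn).2)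
        rw [abs_of_nonneg hs]; linarith
      · have := hg.norm_sub_le_of_joins ((hη n).joins s 0 (abs_le.1 hn).1 hs (by simp))
        rw [norm_sub_rev] at this
        rw [abs_of_nonpos hs]; linarith
    have h2 : ‖η n s - η n 0‖ ≤ |s| / c := by
      rw [le_div_iff₀ hc, mul_comm]; exact h1
    have h3 : ‖η n s‖ ≤ ‖η n s - η n 0‖ + ‖η n 0‖ := norm_le_norm_sub_add _ _
    linarith
  have hlim : ∀ s : ℝ, ∃ x, Tendsto (fun n => η n s) U (nhds x) := by
    intro s
    have hK : IsCompact (Metric.closedBall (0 : V d) (1 + |s| / c)) := isCompact_closedBall _ _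
    obtain ⟨x, -, hx⟩ := hK.ultrafilter_le_nhds' (U.map fun n => η n s) (by
      rw [Ultrafilter.mem_map]
      filter_upwards [hlarge s] with n hn
      simpa using hbdd s n hn)
    exact ⟨x, hx⟩
  choose γ hγ using hlim
  have hN : ∀ s, ‖(γ s).2‖ = 1 := by
    intro s
    have h1 : Tendsto (fun n => ‖(η n s).2‖) U (nhds ‖(γ s).2‖) :=
      ((continuous_snd.norm).tendsto (γ s)).comp (hγ s)
    have h2 : Tendsto (fun n => ‖(η n s).2‖) U (nhds 1) := by
      refine tendsto_const_nhds.congr' ?_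
      filter_upwards [hlarge s] with n hn
      exact (hnorm s n hn).symm
    exact tendsto_nhds_unique h1 h2
  -- short connections between the limit and its approximations
  have hconn : ∀ s : ℝ, ∀ ε > 0, ∀ᶠ n in U,
      Joins g (γ s) (η n s) ε ∧ Joins g (η n s) (γ s) ε := by
    intro s ε hε
    have hδ : 0 < min (1 / 2) (ε / (4 * C)) := by positivity
    have := (Metric.tendsto_nhds.1 (hγ s)) _ hδ
    filter_upwards [this, hlarge s] with n hn hns
    rw [dist_eq_norm] at hn
    have h1 : ‖η n s - γ s‖ ≤ 1 / 2 := hn.le.trans (min_le_left _ _)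
    have h2 : 4 * C * ‖η n s - γ s‖ ≤ ε := by
      have : ‖η n s - γ s‖ ≤ ε / (4 * C) := hn.le.trans (min_le_right _ _)
      rw [le_div_iff₀ (by positivity)] at this
      linarith
    refine ⟨(hg.joins_near (hN s) (hnorm s n hns) h1).mono h2, ?_⟩
    refine (hg.joins_near (hnorm s n hns) (hN s) ?_).mono ?_
    · rwa [norm_sub_rev]
    · rwa [norm_sub_rev]
  refine ⟨γ, hN, ?_, ?_⟩
  · intro s t hst ε hε
    obtain ⟨n, h1, h2, hs, ht⟩ := ((hconn s (ε / 2) (by linarith)).and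
      ((hconn t (ε / 2) (by linarith)).and ((hlarge s).and (hlarge t)))).exists
    have h3 := (hη n).joins s t (abs_le.1 hs).1 hst (abs_le.1 ht).2
    exact (hg.joins_trans (hg.joins_trans h1.1 h3) h2.2).mono (by linarith)
  · intro s t hst ℓ hJ
    refine le_of_forall_pos_le_add fun ε hε => ?_
    have hsmall : ∀ᶠ n : ℕ in U, 1 / ((n : ℝ) + 1) < ε / 3 :=
      hUtop (tendsto_one_div_add_atTop_nhds_zero_nat.eventually (gt_mem_nhds (by linarith)))
    obtain ⟨n, h1, h2, hs, ht, hn⟩ := ((hconn s (ε / 3) (by linarith)).and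
      ((hconn t (ε / 3) (by linarith)).and ((hlarge s).and ((hlarge t).and hsmall)))).exists
    have h3 := (hη n).le s t (abs_le.1 hs).1 hst (abs_le.1 ht).2 _
      (hg.joins_trans (hg.joins_trans h1.2 hJ) h2.1)
    linarith

/-! ### Regularity of lines -/

/-- Infinitesimally the distance is bounded below by the norm of `g p`: a short curve from `p` stays
where `g` is close to `g p`, and there its length dominates that of the straight segment. -/
lemma Comparable.local_lower (hg : Comparable g c C) {p : V d} (hp : ‖p.2‖ = 1) {ε : ℝ}
    (hε : 0 < ε) (hε1 : ε < 1) : ∃ δ > 0, ∀ q ℓ, Joins g p q ℓ → ℓ < δ →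
      (1 - ε) * √(g p (q - p) (q - p)) ≤ ℓ := by
  have hc := hg.c_pos
  have hcp : ContinuousAt g p := hg.cont.continuousAt
  obtain ⟨r, hr, hball⟩ := (Metric.continuousAt_iff (f := g) (a := p)).1 hcp (ε * c ^ 2)
    (by positivity)
  refine ⟨c * r, by positivity, ?_⟩
  rintro q ℓ ⟨σ, a, b, hab, hσ, ha, hb, hlen⟩ hℓ
  have haI : a ∈ Icc a b := ⟨le_rfl, hab⟩
  have hbI : b ∈ Icc a b := ⟨hab, le_rfl⟩
  set w := q - p with hw
  set A := √(g p w w) with hA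
  have hstay : ∀ t ∈ Icc a b, dist (σ.f t) p < r := by
    intro t ht
    have h1 := hg.norm_sub_le_glen ht.1 (hσ.mono le_rfl ht.2)
    have h2 := hg.glen_add hσ haI ht hbI
    have h3 := glen_nonneg (g := g) (σ := σ) ht.2
    rw [dist_eq_norm, ← ha]
    exact lt_of_mul_lt_mul_left (by linarith) hc.le
  have hcomp : ∀ t ∈ Icc a b, ∀ v, (1 - ε) * √(g p v v) ≤ √(g (σ.f t) v v) := by
    intro t ht v
    have h1 : ‖g (σ.f t) - g p‖ < ε * c ^ 2 :=
      (dist_eq_norm (g (σ.f t)) (g p)).symm.trans_lt (hball (hstay t ht))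
    have h2 : |g (σ.f t) v v - g p v v| ≤ ε * c ^ 2 * ‖v‖ * ‖v‖ := by
      have := (g (σ.f t) - g p).le_opNorm₂ v v
      simp only [sub_apply, Real.norm_eq_abs] at this
      refine this.trans ?_
      gcongr
    have h3 : (c * ‖v‖) ^ 2 ≤ g p v v := by
      rw [← Real.sq_sqrt (hg.nonneg p hp v)]
      gcongr
      exact hg.lower p hp v
    have h4 := (abs_le.1 h2).1
    have h5 : (1 - ε) * g p v v ≤ g (σ.f t) v v := by nlinarith
    refine Real.le_sqrt_of_sq_le ?_
    rw [mul_pow, Real.sq_sqrt (hg.nonneg p hp v)]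
    have h6 := hg.nonneg p hp v
    nlinarith [mul_nonneg h6 (mul_nonneg hε.le (sub_nonneg.2 hε1.le))]
  -- Cauchy-Schwarz for the form `g p`
  have hCS : ∀ v, g p w v ≤ A * √(g p v v) := by
    intro v
    have hq : ∀ x : ℝ, 0 ≤ g p v v * (x * x) + (2 * g p w v) * x + g p w w := fun x => by
      have := hg.nonneg p hp (w + x • v)
      simp only [map_add, map_smul, add_apply, smul_apply, smul_eq_mul, hg.symm p hp v w] at this
      linarith
    have hd := discrim_le_zero hq
    rw [discrim] at hd
    rw [hA, ← Real.sqrt_mul (hg.nonneg p hp w)]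
    refine Real.le_sqrt_of_sq_le ?_
    linarith
  have hint : g p w w = ∫ t in a..b, g p w (σ.f' t) := by
    rw [(g p w).intervalIntegral_comp_comm (hσ.intervalIntegrable haI hbI)]
    congr 1
    rw [hw, ← ha, ← hb, hσ.sub_eq haI hbI, add_sub_cancel_left]
  have hσi := hσ.intervalIntegrable haI hbI
  have hwi : IntervalIntegrable (fun t => g p w (σ.f' t)) volume a b :=
    ⟨(g p w).integrable_comp hσi.1, (g p w).integrable_comp hσi.2⟩
  have hle : (1 - ε) * g p w w ≤ A * glen g σ a b := by
    rw [hint, glen, ← intervalIntegral.integral_const_mul, ← intervalIntegral.integral_const_mul]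
    refine intervalIntegral.integral_mono_on hab
      (hwi.const_mul _) ((hg.intervalIntegrable_speed hσ haI hbI).const_mul _) fun t ht => ?_
    have h1 := hCS (σ.f' t)
    have h2 := mul_le_mul_of_nonneg_left (hcomp t ht (σ.f' t)) (Real.sqrt_nonneg (g p w w))
    have h3 := mul_le_mul_of_nonneg_left h1 (sub_nonneg.2 hε1.le)
    rw [← hA] at h2
    linarith
  have hA0 : 0 ≤ A := Real.sqrt_nonneg _
  have hAA : g p w w = A * A := (Real.mul_self_sqrt (hg.nonneg p hp w)).symm
  rcases hA0.eq_or_lt with h0 | hApos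
  · rw [← h0, mul_zero]
    exact (glen_nonneg hab).trans hlen
  · refine le_trans ?_ hlen
    rw [hAA] at hle
    refine le_of_mul_le_mul_left ?_ hApos
    linarith

lemma IsLine.lipschitz (hg : Comparable g c C) {γ : ℝ → V d} (hγ : IsLine g γ) :
    LipschitzWith (1 / c).toNNReal γ := by
  have hc := hg.c_pos
  have key : ∀ s t, s ≤ t → ‖γ t - γ s‖ ≤ 1 / c * (t - s) := by
    intro s t hst
    have : c * ‖γ t - γ s‖ ≤ t - s := le_of_forall_pos_le_add fun ε hε =>
      hg.norm_sub_le_of_joins (hγ.joins s t hst ε hε)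
    rw [one_div, inv_mul_eq_div, le_div_iff₀ hc]
    linarith
  refine LipschitzWith.of_dist_le_mul fun s t => ?_
  rw [Real.coe_toNNReal _ (by positivity), dist_eq_norm, Real.dist_eq]
  rcases le_total s t with h | h
  · rw [norm_sub_rev, abs_sub_comm, abs_of_nonneg (sub_nonneg.2 h)]; exact key s t h
  · rw [abs_of_nonneg (sub_nonneg.2 h)]; exact key t s h

/-- A line has speed at most one wherever it is differentiable. -/
lemma IsLine.speed_le (hg : Comparable g c C) {γ : ℝ → V d} (hγ : IsLine g γ) {t : ℝ}
    (ht : DifferentiableAt ℝ γ t) : √(g (γ t) (deriv γ t) (deriv γ t)) ≤ 1 := by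
  have hp := hγ.norm_eq t
  -- right difference quotients
  have hlim : Tendsto (fun s => (s - t)⁻¹ • (γ s - γ t)) (nhdsWithin t (Ioi t))
      (nhds (deriv γ t)) := by
    have := hasDerivAt_iff_tendsto_slope.1 ht.hasDerivAt
    exact this.mono_left (nhdsWithin_mono _ fun s hs => ne_of_gt hs)
  have hcont : Continuous fun v => √(g (γ t) v v) := by fun_prop
  have hlim2 := (hcont.tendsto _).comp hlim
  have key : ∀ ε : ℝ, 0 < ε → ε < 1 → (1 - ε) * √(g (γ t) (deriv γ t) (deriv γ t)) ≤ 1 := by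
    intro ε hε hε1
    obtain ⟨δ, hδ, hloc⟩ := hg.local_lower hp hε hε1
    refine le_of_tendsto (hlim2.const_mul (1 - ε)) ?_
    filter_upwards [Ioo_mem_nhdsGT (show t < t + δ by linarith)] with s hs
    have hst : 0 < s - t := sub_pos.2 hs.1
    have h1 : (1 - ε) * √(g (γ t) (γ s - γ t) (γ s - γ t)) ≤ s - t := by
      refine le_of_forall_pos_lt_add fun e he => ?_
      set e' := min (e / 2) ((δ - (s - t)) / 2) with he'
      have hs2 : s - t < δ := by linarith [hs.2]
      have he0 : 0 < e' := lt_min (by linarith) (by linarith)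
      have h2 := hloc _ _ (hγ.joins t s hs.1.le e' he0)
        (by have := min_le_right (e / 2) ((δ - (s - t)) / 2); linarith)
      have := min_le_left (e / 2) ((δ - (s - t)) / 2)
      linarith
    simp only [Function.comp_apply, map_smul, smul_apply, smul_eq_mul]
    rw [← mul_assoc, Real.sqrt_mul (by positivity), Real.sqrt_mul_self (by positivity),
      mul_left_comm, inv_mul_le_iff₀ hst, mul_one]
    exact h1
  refine le_of_forall_pos_lt_add fun e he => ?_
  by_contra! hcon
  set x := √(g (γ t) (deriv γ t) (deriv γ t)) with hx
  have hx0 : 0 < x := by linarith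
  -- the choice `ε = e / (2 x)` makes `(1 - ε) x = x - e / 2 > 1`
  have h1 := key (e / (2 * x)) (by positivity) (by rw [div_lt_one (by positivity)]; linarith)
  have h2 : (1 - e / (2 * x)) * x = x - e / 2 := by field_simp
  linarith

/-- For `d ≥ 2`, `R ∈ O(d+1)` and any smooth `τ`-invariant Riemannian
metric `g` on `N = ℝ × S^d` (where `τ(x,p) = (x+1, Rp)`), there exists a nonconstant
locally absolutely continuous Class-A minimizing curve in `N`. In particular every smooth
metric on `S¹ × S^d`, `d ≥ 2`, admits a Class-A geodesic. -/
theorem stmt3 (d : ℕ) (hd : 2 ≤ d)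
    (R : EuclideanSpace ℝ (Fin (d + 1)) ≃ₗᵢ[ℝ] EuclideanSpace ℝ (Fin (d + 1)))
    (g : V d → V d →L[ℝ] V d →L[ℝ] ℝ)
    (hgsmooth : ContDiff ℝ (⊤ : ℕ∞) g)
    (hgsymm : ∀ q : V d, ‖q.2‖ = 1 → ∀ v w : V d, g q v w = g q w v)
    (hgpos : ∀ q : V d, ‖q.2‖ = 1 → ∀ v : V d, v ≠ 0 → 0 < g q v v)
    (hginv : ∀ q : V d, ‖q.2‖ = 1 → ∀ v w : V d,
      g (q.1 + 1, R q.2) (v.1, R v.2) (w.1, R w.2) = g q v w) :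
    ∃ γ : ACIn d, (∀ a b : ℝ, IsACOnN γ a b) ∧ (∃ t₁ t₂ : ℝ, γ.f t₁ ≠ γ.f t₂) ∧
      ∀ t₁ t₂ : ℝ, t₁ ≤ t₂ → ∀ σ : ACIn d, IsACOnN σ t₁ t₂ →
        σ.f t₁ = γ.f t₁ → σ.f t₂ = γ.f t₂ →
        glen g γ t₁ t₂ ≤ glen g σ t₁ t₂ := by
  have hinv : ShiftInvariant R g := hginv
  obtain ⟨c, C, hg⟩ := exists_comparable hgsmooth.continuous hgsymm hgpos hinv
  obtain ⟨γ, hγ⟩ := exists_isLine hg (exists_almostLine hg hinv)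
  have hlip := hγ.lipschitz hg
  have hac := isACOnN_of_lipschitz hlip hγ.norm_eq
  refine ⟨⟨γ, deriv γ⟩, hac, ⟨0, 1, fun h01 => ?_⟩, ?_⟩
  · have h01' : γ 0 = γ 1 := h01
    have h := hγ.le 0 1 zero_le_one 0 (h01' ▸ Joins.refl (hγ.norm_eq 0))
    linarith
  · intro t₁ t₂ ht σ hσ h1 h2
    have hlow : t₂ - t₁ ≤ glen g σ t₁ t₂ :=
      hγ.le t₁ t₂ ht _ ⟨σ, t₁, t₂, ht, hσ, h1, h2, le_rfl⟩
    refine le_trans ?_ hlow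
    have hup : glen g ⟨γ, deriv γ⟩ t₁ t₂ ≤ ∫ _ in t₁..t₂, (1 : ℝ) := by
      refine intervalIntegral.integral_mono_ae ht
        (hg.intervalIntegrable_speed (hac t₁ t₂) ⟨le_rfl, ht⟩ ⟨ht, le_rfl⟩)
        intervalIntegrable_const ?_
      filter_upwards [hlip.ae_differentiableAt_real] with t hdt
      exact hγ.speed_le hg hdt
    simpa using hup
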